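/- arXiv:2010.07407 — 3 statements merged into one kernel-verified Lean document; each statement's English description precedes it below -/
import Mathlib

section
/- Let G be a finitely generated group having a subgroup of finite index isomorphic to ℤⁿ. Then there exist a finite normal subgroup K of G and an injective homomorphism from the quotient G/K into the isometry group of n-dimensional Euclidean space (EuclideanSpace ℝ (Fin n)) such that the induced action of G/K is proper (for every R ≥ 0 the set of elements moving the origin by at most R is finite) and cocompact (there exists R ≥ 0 such that every point of Euclidean space lies within distance R of the orbit of the origin). That is, G has a quotient by a finite normal subgroup that is a crystallographic group. -/
/-!
Pass to a normal subgroup `N ≅ ℤⁿ` of finite index. Conjugation makes `V = ℝ ⊗ N` an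
`n`-dimensional representation `ρ` of `G` which factors through the finite group `G ⧸ N`, so it
becomes orthogonal in suitable Euclidean coordinates. The inclusion `N → V` extends to a
`1`-cocycle `c : G → V`: the obstruction is a class in `H²(G ⧸ N, V)`, which vanishes by averaging
over `G ⧸ N`. Hence `G` acts on `V` by the isometries `x ↦ ρ g x + c g`, and the elements of `N`
act as the translations by a lattice. This already makes the action of `N` proper and cocompact,
which passes to `G`; the kernel of the action is finite because the action is proper.
-/

open Module
open scoped TensorProduct

/-- An isometric action of `G` on `X` is geometric if it is proper and cocompact. Both conditions
are expressed through the orbit of a base point `x`: balls around `x` contain only finitely many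
orbit points, counted with multiplicity, and the orbit is coarsely dense. -/
structure IsGeometricAt {G X : Type*} [Group G] [PseudoMetricSpace X] (F : G →* (X ≃ᵢ X))
    (x : X) : Prop where
  finite_setOf_dist_le : ∀ R : ℝ, {g | dist (F g x) x ≤ R}.Finite
  exists_dist_le : ∃ R : ℝ, ∀ y, ∃ g, dist y (F g x) ≤ R

namespace IsGeometricAt

section PseudoMetricSpace

variable {G X : Type*} [Group G] [PseudoMetricSpace X] {F : G →* (X ≃ᵢ X)} {x : X}

theorem of_finiteIndex (H : Subgroup G) [H.FiniteIndex]
    (h : IsGeometricAt (F.comp H.subtype) x) : IsGeometricAt F x where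
  finite_setOf_dist_le R := by
    let t (q : G ⧸ H) : Set H := {a | dist (F a x) x ≤ R + dist (F q.out⁻¹ x) x}
    have ht : (⋃ q, (fun a : H ↦ q.out * (a : G)) '' t q).Finite :=
      Set.finite_iUnion fun q ↦ (h.finite_setOf_dist_le _).image _
    refine ht.subset fun g (hg : dist (F g x) x ≤ R) ↦ ?_
    obtain ⟨a, ha⟩ := QuotientGroup.mk_out_eq_mul H g
    set s : G := (g : G ⧸ H).out
    refine Set.mem_iUnion.2 ⟨(g : G ⧸ H), a⁻¹, ?_, by simp [s, ha]⟩
    have ha_apply : F ((a⁻¹ : H) : G) x = F s⁻¹ (F g x) := by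
      rw [← IsometryEquiv.mul_apply, ← map_mul, ha]
      simp
    calc dist (F ((a⁻¹ : H) : G) x) x
      _ = dist (F s⁻¹ (F g x)) x := by rw [ha_apply]
      _ ≤ dist (F s⁻¹ (F g x)) (F s⁻¹ x) + dist (F s⁻¹ x) x := dist_triangle ..
      _ ≤ R + dist (F s⁻¹ x) x := by gcongr; rwa [(F s⁻¹).dist_eq]
  exists_dist_le := by
    obtain ⟨R, hR⟩ := h.exists_dist_le
    exact ⟨R, fun y ↦ let ⟨a, ha⟩ := hR y; ⟨a, ha⟩⟩

theorem finite_ker (h : IsGeometricAt F x) : Finite F.ker :=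
  ((h.finite_setOf_dist_le 0).subset fun g (hg : F g = 1) ↦ by simp [hg]).to_subtype

theorem kerLift (h : IsGeometricAt F x) : IsGeometricAt (QuotientGroup.kerLift F) x where
  finite_setOf_dist_le R := by
    refine ((h.finite_setOf_dist_le R).image QuotientGroup.mk).subset fun q hq ↦ ?_
    obtain ⟨g, rfl⟩ := QuotientGroup.mk_surjective q
    exact ⟨g, hq, rfl⟩
  exists_dist_le := by
    obtain ⟨R, hR⟩ := h.exists_dist_le
    exact ⟨R, fun y ↦ let ⟨g, hg⟩ := hR y; ⟨g, hg⟩⟩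

end PseudoMetricSpace

theorem of_range_eq_span {G E ι : Type*} [Group G] [NormedAddCommGroup E] [NormedSpace ℝ E]
    [Finite ι] {F : G →* (E ≃ᵢ E)} (b : Basis ι ℝ E) (hinj : Function.Injective fun g ↦ F g 0)
    (hrange : Set.range (fun g ↦ F g 0) = Submodule.span ℤ (Set.range b)) :
    IsGeometricAt F 0 where
  finite_setOf_dist_le R := by
    have := Module.Finite.of_basis b
    have := FiniteDimensional.proper_real E
    refine Set.Finite.of_finite_image ?_ hinj.injOn
    refine (ZSpan.setFinite_inter b (Metric.isBounded_closedBall (x := 0) (r := R))).subset ?_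
    rintro - ⟨g, hg, rfl⟩
    exact ⟨hg, hrange ▸ Set.mem_range_self g⟩
  exists_dist_le := by
    have := Fintype.ofFinite ι
    refine ⟨∑ i, ‖b i‖, fun y ↦ ?_⟩
    obtain ⟨g, hg : F g 0 = ZSpan.floor b y⟩ : (ZSpan.floor b y : E) ∈ Set.range fun g ↦ F g 0 :=
      hrange ▸ (ZSpan.floor b y).2
    refine ⟨g, ?_⟩
    rw [hg, dist_eq_norm, ← ZSpan.fract_apply]
    exact ZSpan.norm_fract_le b y

end IsGeometricAt

section Orthogonalization

variable {V : Type*} [AddCommGroup V] [Module ℝ V] [FiniteDimensional ℝ V]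

theorem exists_linearEquiv_euclideanSpace_norm_eq {W : Type*} [NormedAddCommGroup W]
    [InnerProductSpace ℝ W] {n : ℕ} (hn : finrank ℝ V = n) (T : V →ₗ[ℝ] W)
    (hT : Function.Injective T) :
    ∃ P : V ≃ₗ[ℝ] EuclideanSpace ℝ (Fin n), ∀ v, ‖P v‖ = ‖T v‖ := by
  let e := LinearEquiv.ofInjective T hT
  let b := (stdOrthonormalBasis ℝ T.range).reindex (finCongr (e.finrank_eq ▸ hn))
  exact ⟨e.trans b.repr.toLinearEquiv, fun v ↦ b.repr.norm_map (e v)⟩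

theorem exists_linearEquiv_euclideanSpace_norm_invariant {H : Type*} [Group H] [Finite H]
    (ρ : Representation ℝ H V) {n : ℕ} (hn : finrank ℝ V = n) :
    ∃ P : V ≃ₗ[ℝ] EuclideanSpace ℝ (Fin n), ∀ h v, ‖P (ρ h v)‖ = ‖P v‖ := by
  have := Fintype.ofFinite H
  let P₀ : V ≃ₗ[ℝ] EuclideanSpace ℝ (Fin n) := .ofFinrankEq _ _ (by simp [hn])
  -- `v ↦ (h ↦ P₀ (ρ h v))` intertwines `ρ` with the permutation of the coordinates.
  let T : V →ₗ[ℝ] PiLp 2 fun _ : H ↦ EuclideanSpace ℝ (Fin n) :=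
    (WithLp.linearEquiv 2 ℝ (H → EuclideanSpace ℝ (Fin n))).symm.toLinearMap ∘ₗ
      LinearMap.pi fun h ↦ P₀.toLinearMap ∘ₗ ρ h
  have hT_inj : Function.Injective T := fun v w hvw ↦
    P₀.injective (by simpa [T] using congr($hvw 1))
  have hT_norm (h : H) (v : V) : ‖T (ρ h v)‖ = ‖T v‖ := by
    rw [PiLp.norm_eq_of_L2, PiLp.norm_eq_of_L2]
    congr 1
    exact Fintype.sum_equiv (Equiv.mulRight h) _ _ fun k ↦ by simp [T]
  obtain ⟨P, hP⟩ := exists_linearEquiv_euclideanSpace_norm_eq hn T hT_inj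
  exact ⟨P, fun h v ↦ by rw [hP, hP, hT_norm]⟩

theorem exists_linearEquiv_conj_linearIsometryEquiv {G : Type*} [Group G]
    (ρ : Representation ℝ G V) (N : Subgroup G) [N.Normal] [N.FiniteIndex]
    [Representation.IsTrivial (ρ.comp N.subtype)] {n : ℕ} (hn : finrank ℝ V = n) :
    ∃ (P : V ≃ₗ[ℝ] EuclideanSpace ℝ (Fin n))
      (σ : G →* (EuclideanSpace ℝ (Fin n) ≃ₗᵢ[ℝ] EuclideanSpace ℝ (Fin n))),
      ∀ g v, σ g (P v) = P (ρ g v) := by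
  obtain ⟨P, hP⟩ := exists_linearEquiv_euclideanSpace_norm_invariant (ρ.ofQuotient N) hn
  let σ (g : G) : EuclideanSpace ℝ (Fin n) →ₗᵢ[ℝ] EuclideanSpace ℝ (Fin n) :=
    ⟨P.conj (ρ g), fun x ↦ by simpa using hP g (P.symm x)⟩
  refine ⟨P, MonoidHom.mk' (fun g ↦ (σ g).toLinearIsometryEquiv rfl) fun g h ↦ ?_, fun g v ↦ ?_⟩
  · ext1 x
    simp [σ, LinearEquiv.conj_apply]
  · simp [σ, LinearEquiv.conj_apply]

end Orthogonalization

section AffineIsometry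

variable {𝕜 G E : Type*} [Semiring 𝕜] [Group G] [SeminormedAddCommGroup E] [Module 𝕜 E]

/-- The action of `G` by the affine isometries `x ↦ σ g x + c g`, for a `1`-cocycle `c` with values
in the isometric representation `σ`. -/
def affineIsometryHom (σ : G →* (E ≃ₗᵢ[𝕜] E)) (c : G → E)
    (hc : ∀ g h, c (g * h) = c g + σ g (c h)) : G →* (E ≃ᵢ E) :=
  MonoidHom.mk' (fun g ↦ (σ g).toIsometryEquiv.trans (.vaddConst (c g))) fun g h ↦ by
    ext x
    simp [hc, add_left_comm, add_comm]

theorem affineIsometryHom_apply (σ : G →* (E ≃ₗᵢ[𝕜] E)) (c : G → E)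
    (hc : ∀ g h, c (g * h) = c g + σ g (c h)) (g : G) (x : E) :
    affineIsometryHom σ c hc g x = σ g x + c g :=
  rfl

end AffineIsometry

section Cocycle

variable {k G V : Type*} [Group G] {N : Subgroup G} [N.Normal] [AddCommGroup V]

theorem mul_inv_out_mem (g : G) : g * (g : G ⧸ N).out⁻¹ ∈ N := by
  rw [← QuotientGroup.eq_one_iff]
  simp

/-- The extension of `θ : N → V` to a function on `G` that satisfies `f (a * g) = θ a + f g` for
`a ∈ N` and vanishes on the chosen representatives of `G ⧸ N`. -/
noncomputable def cosetExtension (θ : Additive N →+ V) (g : G) : V :=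
  θ (.ofMul ⟨g * (g : G ⧸ N).out⁻¹, mul_inv_out_mem g⟩)

theorem cosetExtension_mul_left (θ : Additive N →+ V) (a : N) (g : G) :
    cosetExtension θ (a * g) = θ (.ofMul a) + cosetExtension θ g := by
  have ha : ((a * g : G) : G ⧸ N) = g := by
    rw [QuotientGroup.mk_mul, (QuotientGroup.eq_one_iff _).2 a.2, one_mul]
  rw [cosetExtension, cosetExtension, ← map_add, ← ofMul_mul]
  congr 2
  ext
  simp [ha, mul_assoc]

variable [Semiring k] [Module k V] {ρ : Representation k G V} {θ : Additive N →+ V}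

variable (ρ θ) in
/-- Equivariance of `θ : N → V` for the conjugation action of `G` on `N` and the
representation `ρ` on `V`. -/
def IsConjEquivariant : Prop :=
  ∀ (g : G) (a : N), θ (.ofMul (MulAut.conjNormal g a)) = ρ g (θ (.ofMul a))

theorem cosetExtension_mul_right (hθ : IsConjEquivariant ρ θ) (g : G) (a : N) :
    cosetExtension θ (g * a) = ρ g (θ (.ofMul a)) + cosetExtension θ g := by
  rw [← hθ, ← cosetExtension_mul_left]
  simp

theorem apply_cosetExtension (hθ : IsConjEquivariant ρ θ) (a : N) (g : G) :
    ρ a (cosetExtension θ g) = cosetExtension θ g := by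
  rw [cosetExtension, ← hθ]
  set b : N := ⟨g * (g : G ⧸ N).out⁻¹, mul_inv_out_mem g⟩
  have hconj : MulAut.conjNormal (a : G) b = a * b * a⁻¹ := rfl
  simp [hconj]

variable (ρ θ) in
/-- The failure of `cosetExtension θ` to be `G`-equivariant. If `θ` is equivariant, then as a
function of `x` it is constant on the cosets of `N`, so it can be averaged over `G ⧸ N`. -/
noncomputable def equivarianceDefect (g x : G) : V :=
  cosetExtension θ (g * x) - ρ g (cosetExtension θ x)

theorem equivarianceDefect_out (hθ : IsConjEquivariant ρ θ) (g x : G) :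
    equivarianceDefect ρ θ g (x : G ⧸ N).out = equivarianceDefect ρ θ g x := by
  obtain ⟨a, ha⟩ := QuotientGroup.mk_out_eq_mul N x
  rw [ha]
  simp [equivarianceDefect, ← mul_assoc, cosetExtension_mul_right hθ]

theorem equivarianceDefect_mul (g h x : G) :
    equivarianceDefect ρ θ (g * h) x =
      equivarianceDefect ρ θ g (h * x) + ρ g (equivarianceDefect ρ θ h x) := by
  simp [equivarianceDefect, mul_assoc]

theorem equivarianceDefect_coe (hθ : IsConjEquivariant ρ θ) (a : N) (x : G) :
    equivarianceDefect ρ θ a x = θ (.ofMul a) := by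
  simp [equivarianceDefect, cosetExtension_mul_left, apply_cosetExtension hθ]

theorem exists_cocycle_extending [N.FiniteIndex] (hN : IsUnit (N.index : k))
    (hθ : IsConjEquivariant ρ θ) :
    ∃ c : G → V, (∀ g h, c (g * h) = c g + ρ g (c h)) ∧ ∀ a : N, c a = θ (.ofMul a) := by
  have := Fintype.ofFinite (G ⧸ N)
  obtain ⟨u, hu⟩ := hN
  let S (g : G) : V := ∑ q : G ⧸ N, equivarianceDefect ρ θ g q.out
  have hS_mul (g h : G) : S (g * h) = S g + ρ g (S h) := by
    have hreindex : ∑ q : G ⧸ N, equivarianceDefect ρ θ g (h * q.out) = S g := by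
      refine Fintype.sum_equiv (Equiv.mulLeft (h : G ⧸ N)) _ _ fun q ↦ ?_
      rw [← equivarianceDefect_out hθ]
      simp
    simp only [S, equivarianceDefect_mul, Finset.sum_add_distrib, hreindex, map_sum]
  have hS_coe (a : N) : S a = (u : k) • θ (.ofMul a) := by
    simp [S, equivarianceDefect_coe hθ, hu, Subgroup.index_eq_card, Nat.cast_smul_eq_nsmul]
  refine ⟨fun g ↦ (↑u⁻¹ : k) • S g, fun g h ↦ ?_, fun a ↦ ?_⟩
  · simp [hS_mul]
  · simp [hS_coe, smul_smul]

end Cocycle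

section FiniteIndex

variable {A M : Type*} [AddCommGroup M]

theorem nonempty_mulEquiv_multiplicative_of_finiteIndex [Group A] [Free ℤ M] [Module.Finite ℤ M]
    (e : A ≃* Multiplicative M) (H : Subgroup A) [H.FiniteIndex] :
    Nonempty (H ≃* Multiplicative M) := by
  let L : Submodule ℤ M := (H.map e.toMonoidHom).toAddSubgroup'.toIntSubmodule
  have hL : finrank ℤ L = finrank ℤ M := by
    rw [← Submodule.finiteQuotient_iff]
    have : (H.map e.toMonoidHom).FiniteIndex :=
      ⟨by simpa using Subgroup.FiniteIndex.index_ne_zero (H := H)⟩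
    exact Subgroup.finite_quotient_of_finiteIndex (H := H.map e.toMonoidHom)
  exact ⟨(e.subgroupMap H).trans (LinearEquiv.ofFinrankEq L M hL).toAddEquiv.toMultiplicative⟩

open scoped IsMulCommutative in
theorem exists_normal_finiteIndex_basis {G ι : Type*} [Group G] [Finite ι] (A : Subgroup G)
    [A.FiniteIndex] (e : A ≃* Multiplicative M) (b : Basis ι ℤ M) :
    ∃ (N : Subgroup G) (_ : N.Normal) (_ : N.FiniteIndex) (_ : IsMulCommutative N),
      Nonempty (Basis ι ℤ (Additive N)) := by
  have := Module.Finite.of_basis b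
  have := Module.Free.of_basis b
  obtain ⟨e'⟩ := nonempty_mulEquiv_multiplicative_of_finiteIndex e (A.normalCore.subgroupOf A)
  let f : A.normalCore ≃* Multiplicative M :=
    (Subgroup.subgroupOfEquivOfLe A.normalCore_le).symm.trans e'
  have hcomm : IsMulCommutative A.normalCore :=
    ⟨⟨fun a b ↦ f.injective (by rw [map_mul, map_mul, mul_comm])⟩⟩
  exact ⟨A.normalCore, inferInstance, inferInstance, hcomm,
    ⟨b.map (MulEquiv.toAdditiveLeft f).symm.toIntLinearEquiv⟩⟩

end FiniteIndex

section ConjRepresentation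

open scoped IsMulCommutative

variable {G : Type*} [Group G] (N : Subgroup G) [N.Normal] [IsMulCommutative N]

/-- The representation of `G` on `k ⊗ N` induced by conjugation on the commutative normal
subgroup `N`, which is written additively to be tensored with `k`. -/
noncomputable def conjRepresentation (k : Type*) [CommRing k] :
    Representation k G (k ⊗[ℤ] Additive N) :=
  (Module.End.baseChangeHom ℤ k (Additive N) : _ →* _).comp <|
    (Representation.ofMulDistribMulAction (ConjAct G) N).comp ConjAct.toConjAct.toMonoidHom

theorem conjRepresentation_tmul {k : Type*} [CommRing k] (g : G) (r : k) (a : N) :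
    conjRepresentation N k g (r ⊗ₜ .ofMul a) = r ⊗ₜ .ofMul (MulAut.conjNormal g a) :=
  rfl

instance conjRepresentation_comp_subtype_isTrivial {k : Type*} [CommRing k] :
    Representation.IsTrivial ((conjRepresentation N k).comp N.subtype) where
  out a := by
    ext b
    induction b with | ofMul b => _
    have hconj : MulAut.conjNormal (a : G) b = b := by
      ext
      simpa [mul_inv_eq_iff_eq_mul] using congr((($(mul_comm a b) : N) : G))
    simp [conjRepresentation_tmul, hconj]

theorem exists_isGeometricAt_euclideanSpace [N.FiniteIndex] {n : ℕ}
    (b : Basis (Fin n) ℤ (Additive N)) :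
    ∃ F : G →* (EuclideanSpace ℝ (Fin n) ≃ᵢ EuclideanSpace ℝ (Fin n)), IsGeometricAt F 0 := by
  have := Module.Finite.of_basis b
  have := Module.Free.of_basis b
  have hn : finrank ℝ (ℝ ⊗[ℤ] Additive N) = n := by simp [finrank_eq_card_basis b]
  have hN : IsUnit (N.index : ℝ) := by simpa using Subgroup.FiniteIndex.index_ne_zero
  let θ : Additive N →ₗ[ℤ] ℝ ⊗[ℤ] Additive N := TensorProduct.mk ℤ ℝ (Additive N) 1
  have hθ : IsConjEquivariant (conjRepresentation N ℝ) θ.toAddMonoidHom := fun g a ↦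
    (conjRepresentation_tmul N g 1 a).symm
  obtain ⟨c, hc_mul, hc_coe⟩ := exists_cocycle_extending hN hθ
  obtain ⟨P, σ, hσ⟩ := exists_linearEquiv_conj_linearIsometryEquiv (conjRepresentation N ℝ) N hn
  let F := affineIsometryHom σ (fun g ↦ P (c g)) fun g h ↦ by simp [hc_mul, hσ]
  let f : Additive N →ₗ[ℤ] EuclideanSpace ℝ (Fin n) := P.toLinearMap.restrictScalars ℤ ∘ₗ θ
  have hF : (fun a : N ↦ F a 0) = f ∘ Additive.ofMul := by
    ext1 a
    rw [affineIsometryHom_apply]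
    simp [f, hc_coe]
  have hf_inj : Function.Injective f :=
    P.injective.comp (Flat.tensorProduct_mk_injective ℤ (Additive N) ℝ)
  have hf_range : f.range = Submodule.span ℤ (Set.range ((b.baseChange ℝ).map P)) := by
    have hfb : f ∘ b = (b.baseChange ℝ).map P := by
      ext1 i
      rw [Basis.map_apply, Basis.baseChange_apply]
      rfl
    rw [f.range_eq_map, ← b.span_eq, Submodule.map_span, ← Set.range_comp, hfb]
  refine ⟨F, .of_finiteIndex N <| .of_range_eq_span ((b.baseChange ℝ).map P) ?_ ?_⟩
  · exact hF ▸ hf_inj.comp Additive.ofMul.injective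
  · rw [← hf_range, f.coe_range, ← Additive.ofMul.surjective.range_comp f]
    exact congrArg Set.range hF

end ConjRepresentation

/-- Zassenhaus: a finitely generated group with a finite-index subgroup isomorphic to `ℤⁿ`
has a finite normal subgroup `K` such that `G/K` embeds in the isometry group of
`n`-dimensional Euclidean space, acting properly and cocompactly; that is, `G/K` is a
crystallographic group. -/
theorem virtually_abelian_has_crystallographic_quotient
    {G : Type*} [Group G] (hfg : Group.FG G) (n : ℕ)
    (hab : ∃ A : Subgroup G, A.FiniteIndex ∧
      Nonempty (A ≃* Multiplicative (Fin n → ℤ))) :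
    ∃ (K : Subgroup G) (hK : K.Normal), Finite K ∧
      haveI := hK
      ∃ f : G ⧸ K →* (EuclideanSpace ℝ (Fin n) ≃ᵢ EuclideanSpace ℝ (Fin n)),
        Function.Injective f ∧
        (∀ R : ℝ, 0 ≤ R → {q : G ⧸ K | dist ((f q) 0) 0 ≤ R}.Finite) ∧
        (∃ R : ℝ, 0 ≤ R ∧ ∀ x : EuclideanSpace ℝ (Fin n), ∃ q : G ⧸ K,
          dist x ((f q) 0) ≤ R) := by
  obtain ⟨A, _, ⟨e⟩⟩ := hab
  obtain ⟨N, _, _, _, ⟨b⟩⟩ := exists_normal_finiteIndex_basis A e (Pi.basisFun ℤ (Fin n))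
  obtain ⟨F, hF⟩ := exists_isGeometricAt_euclideanSpace N b
  obtain ⟨R, hR⟩ := hF.kerLift.exists_dist_le
  have hR_nonneg : 0 ≤ R := let ⟨_, hq⟩ := hR 0; dist_nonneg.trans hq
  exact ⟨F.ker, inferInstance, hF.finite_ker, QuotientGroup.kerLift F,
    QuotientGroup.kerLift_injective F, fun R _ ↦ hF.kerLift.finite_setOf_dist_le R,
    R, hR_nonneg, hR⟩
end

section
/- Let G be a group, let A be a normal subgroup of finite index with a fixed isomorphism ι : ℤⁿ → A, and let A' ≤ A be a subgroup which is normal in G, of finite index in A, with a fixed isomorphism ι' : ℤⁿ → A'. Let ρ, ρ' : G → GL(n, ℤ) be the conjugation actions of G on ℤⁿ via ι and ι' respectively (so ι(ρ(g) z) = g ι(z) g⁻¹ and ι'(ρ'(g) z) = g ι'(z) g⁻¹). Then there exists f ∈ GL(n, ℝ) such that, viewing ρ(g) and ρ'(g) as elements of GL(n, ℝ), one has ρ'(g) = f⁻¹ ρ(g) f for all g ∈ G. In particular, the point group of a virtually ℤⁿ group is well defined up to conjugation in GL(n, ℝ). -/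
/-!
The inclusion `A' ≤ A`, read through the two identifications, is an injective `ℤ`-linear map from a
lattice to one of the same rank, so its matrix `M` has nonzero determinant and becomes invertible
once the nonzero integers do. Conjugation by `g` on `A'` is the restriction of conjugation by `g` on
`A`, that is, `M * ρ' g = ρ g * M`, so `M` is the conjugating element.
-/

section Lattice

variable {G L L' : Type*} [Group G] [AddCommGroup L] [AddCommGroup L'] {A A' : Subgroup G}

/-- The inclusion of subgroups `A' ≤ A` as a `ℤ`-linear map between additive groups `L'` and `L`
identified with `A'` and `A` through `ι'` and `ι`. -/
def latticeInclusion (hle : A' ≤ A) (ι : Multiplicative L ≃* A) (ι' : Multiplicative L' ≃* A') :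
    L' →ₗ[ℤ] L :=
  (AddMonoidHom.toMultiplicative.symm <|
    ι.symm.toMonoidHom.comp <| (Subgroup.inclusion hle).comp ι'.toMonoidHom).toIntLinearMap

variable (hle : A' ≤ A) (ι : Multiplicative L ≃* A) (ι' : Multiplicative L' ≃* A')

theorem ofAdd_latticeInclusion (z : L') :
    Multiplicative.ofAdd (latticeInclusion hle ι ι' z) =
      ι.symm (Subgroup.inclusion hle (ι' (Multiplicative.ofAdd z))) :=
  rfl

theorem coe_apply_ofAdd_latticeInclusion (z : L') :
    (ι (Multiplicative.ofAdd (latticeInclusion hle ι ι' z)) : G) =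
      ι' (Multiplicative.ofAdd z) := by
  rw [ofAdd_latticeInclusion, ι.apply_symm_apply, Subgroup.coe_inclusion]

theorem latticeInclusion_injective : Function.Injective (latticeInclusion hle ι ι') :=
  Multiplicative.toAdd.injective.comp <| ι.symm.injective.comp <|
    (Subgroup.inclusion_injective hle).comp <| ι'.injective.comp Multiplicative.ofAdd.injective

theorem latticeInclusion_semiconj {c : G → G} {φ : L → L} {φ' : L' → L'}
    (hφ : ∀ z, (ι (Multiplicative.ofAdd (φ z)) : G) = c (ι (Multiplicative.ofAdd z)))
    (hφ' : ∀ z, (ι' (Multiplicative.ofAdd (φ' z)) : G) = c (ι' (Multiplicative.ofAdd z))) :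
    Function.Semiconj (latticeInclusion hle ι ι') φ' φ := fun z ↦ by
  apply Multiplicative.ofAdd.injective
  apply ι.injective
  apply Subtype.ext
  rw [coe_apply_ofAdd_latticeInclusion, hφ', hφ, coe_apply_ofAdd_latticeInclusion]

end Lattice

section Matrix

open Matrix

variable {m R S : Type*} [Fintype m] [DecidableEq m] [CommRing R] [CommRing S]

theorem det_toMatrix'_ne_zero_of_injective [IsDomain R] {f : (m → R) →ₗ[R] (m → R)}
    (hf : Function.Injective f) : (LinearMap.toMatrix' f).det ≠ 0 := by
  rw [LinearMap.det_toMatrix', Ne, LinearMap.det_eq_zero_iff_ker_ne_bot, not_not]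
  exact LinearMap.ker_eq_bot.mpr hf

theorem toMatrix'_semiconjBy_of_semiconj_mulVec {f : (m → R) →ₗ[R] (m → R)} {P Q : Matrix m m R}
    (h : Function.Semiconj f P.mulVec Q.mulVec) : SemiconjBy (LinearMap.toMatrix' f) P Q :=
  Matrix.mulVec_injective <| funext fun z ↦ by
    simpa only [← mulVec_mulVec, LinearMap.toMatrix'_mulVec] using h z

theorem exists_map_eq_conj_map_of_semiconjBy {α : Type*} (φ : R →+* S) {M : Matrix m m R}
    (hM : IsUnit (φ M.det)) {ρ ρ' : α → GL m R}
    (h : ∀ a, SemiconjBy M (ρ' a : Matrix m m R) (ρ a)) :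
    ∃ f : GL m S, ∀ a,
      GeneralLinearGroup.map φ (ρ' a) = f⁻¹ * GeneralLinearGroup.map φ (ρ a) * f := by
  rw [φ.map_det] at hM
  refine ⟨GeneralLinearGroup.mk'' (φ.mapMatrix M) hM, fun a ↦ ?_⟩
  rw [mul_assoc, eq_inv_mul_iff_mul_eq]
  exact Units.ext ((h a).map φ.mapMatrix)

end Matrix

theorem isUnit_intCast_of_ne_zero {R : Type*} [Ring R] [Algebra ℚ R] {k : ℤ} (hk : k ≠ 0) :
    IsUnit (k : R) := by
  simpa only [map_intCast] using (IsUnit.mk0 (k : ℚ) (Int.cast_ne_zero.mpr hk)).map (algebraMap ℚ R)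

theorem point_group_well_defined_up_to_conjugation_general
    {G m : Type*} [Group G] [Fintype m] [DecidableEq m] (R : Type*) [CommRing R] [Algebra ℚ R]
    {A A' : Subgroup G} (hle : A' ≤ A)
    (ι : Multiplicative (m → ℤ) ≃* A) (ι' : Multiplicative (m → ℤ) ≃* A')
    {ρ ρ' : G → Matrix.GeneralLinearGroup m ℤ}
    (hρ : ∀ (g : G) (z : m → ℤ),
      (ι (Multiplicative.ofAdd (Matrix.mulVec (ρ g : Matrix m m ℤ) z)) : G) =
        g * ι (Multiplicative.ofAdd z) * g⁻¹)
    (hρ' : ∀ (g : G) (z : m → ℤ),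
      (ι' (Multiplicative.ofAdd (Matrix.mulVec (ρ' g : Matrix m m ℤ) z)) : G) =
        g * ι' (Multiplicative.ofAdd z) * g⁻¹) :
    ∃ f : Matrix.GeneralLinearGroup m R, ∀ g : G,
      Matrix.GeneralLinearGroup.map (Int.castRingHom R) (ρ' g) =
        f⁻¹ * Matrix.GeneralLinearGroup.map (Int.castRingHom R) (ρ g) * f := by
  have hdet : (LinearMap.toMatrix' (latticeInclusion hle ι ι')).det ≠ 0 :=
    det_toMatrix'_ne_zero_of_injective (latticeInclusion_injective hle ι ι')
  have hcomm (g : G) : SemiconjBy (LinearMap.toMatrix' (latticeInclusion hle ι ι'))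
      (ρ' g : Matrix m m ℤ) (ρ g) :=
    toMatrix'_semiconjBy_of_semiconj_mulVec <|
      latticeInclusion_semiconj hle ι ι' (c := (g * · * g⁻¹)) (hρ g) (hρ' g)
  exact exists_map_eq_conj_map_of_semiconjBy (Int.castRingHom R)
    (isUnit_intCast_of_ne_zero hdet) hcomm

/-- The point group of a virtually `ℤⁿ` group is well defined up to conjugation in
`GL(n, ℝ)`: the conjugation actions of `G` on two identifications of finite-index normal
subgroups with `ℤⁿ` (one contained in the other) are conjugate in `GL(n, ℝ)`. -/
theorem point_group_well_defined_up_to_conjugation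
    {G : Type*} [Group G] (n : ℕ)
    (A : Subgroup G) (hA : A.Normal) (hAFI : A.FiniteIndex)
    (ι : Multiplicative (Fin n → ℤ) ≃* A)
    (A' : Subgroup G) (hle : A' ≤ A) (hA' : A'.Normal)
    (hA'FI : (A'.subgroupOf A).FiniteIndex)
    (ι' : Multiplicative (Fin n → ℤ) ≃* A')
    (ρ ρ' : G →* Matrix.GeneralLinearGroup (Fin n) ℤ)
    (hρ : ∀ (g : G) (z : Fin n → ℤ),
      ((ι (Multiplicative.ofAdd (Matrix.mulVec (ρ g : Matrix (Fin n) (Fin n) ℤ) z)) : A) : G) =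
        g * ((ι (Multiplicative.ofAdd z) : A) : G) * g⁻¹)
    (hρ' : ∀ (g : G) (z : Fin n → ℤ),
      ((ι' (Multiplicative.ofAdd (Matrix.mulVec (ρ' g : Matrix (Fin n) (Fin n) ℤ) z)) : A') : G) =
        g * ((ι' (Multiplicative.ofAdd z) : A') : G) * g⁻¹) :
    ∃ f : Matrix.GeneralLinearGroup (Fin n) ℝ, ∀ g : G,
      Matrix.GeneralLinearGroup.map (Int.castRingHom ℝ) (ρ' g) =
        f⁻¹ * Matrix.GeneralLinearGroup.map (Int.castRingHom ℝ) (ρ g) * f := by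
  exact point_group_well_defined_up_to_conjugation_general ℝ hle ι ι' hρ hρ'
end

section
/- Let N be a normal subgroup of a group G, let G act on a group M by group automorphisms, and let φ : N → M be a group homomorphism such that φ(g n g⁻¹) = g · φ(n) for all g ∈ G, n ∈ N, and n · m = φ(n) m φ(n)⁻¹ for all n ∈ N, m ∈ M. Then the subset K = {(φ(n)⁻¹, n) : n ∈ N} of the semidirect product M ⋊ G is a normal subgroup of M ⋊ G. -/
/-!
Regard `M` and `G` as subgroups of `M ⋊ G`, so that `(φ(n)⁻¹, n)` is the product `φ(n)⁻¹ n`.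
Conjugation by `n` acts on `M` as conjugation by `φ(n)`, so `φ(n)⁻¹ n` centralizes `M`, and hence
`n ↦ φ(n)⁻¹ n` is multiplicative. Conjugation by `M` thus fixes its range pointwise, and by
equivariance conjugation by `g ∈ G` sends `φ(n)⁻¹ n` to `φ(gng⁻¹)⁻¹ gng⁻¹`. Since `M` and `G`
generate `M ⋊ G`, the range is normal.
-/

open SemidirectProduct

section InverseGraph

variable {N G M : Type*} [Group N] [Group G] [Group M]
  {α : G →* MulAut M} {ι : N →* G} {φ : N →* M}

/-- The homomorphism `n ↦ (φ(n)⁻¹, ι(n))` into `M ⋊ G`, whose range is the graph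
`{(φ(n)⁻¹, n) : n ∈ N}` when `ι` is the inclusion of a subgroup `N` of `G`. -/
@[simps]
def inverseGraphHom (hconj : ∀ n, α (ι n) = MulAut.conj (φ n)) : N →* M ⋊[α] G where
  toFun n := ⟨(φ n)⁻¹, ι n⟩
  map_one' := by ext <;> simp
  map_mul' a b := by ext <;> simp [hconj, mul_assoc]

theorem commute_inl_inverseGraphHom (hconj : ∀ n, α (ι n) = MulAut.conj (φ n)) (m : M) (n : N) :
    Commute (inl m) (inverseGraphHom hconj n) := by
  ext <;> simp [hconj, mul_assoc]

theorem inr_mul_inverseGraphHom_mul_inv (hconj : ∀ n, α (ι n) = MulAut.conj (φ n))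
    {g : G} {n n' : N} (hι : ι n' = g * ι n * g⁻¹) (hφ : φ n' = α g (φ n)) :
    inr g * inverseGraphHom hconj n * (inr g)⁻¹ = inverseGraphHom hconj n' := by
  ext <;> simp [hι, hφ]

theorem normal_range_inverseGraphHom (hconj : ∀ n, α (ι n) = MulAut.conj (φ n))
    (hequiv : ∀ g n, ∃ n', ι n' = g * ι n * g⁻¹ ∧ φ n' = α g (φ n)) :
    (inverseGraphHom hconj).range.Normal := by
  refine ⟨?_⟩
  rintro _ ⟨n, rfl⟩ x
  obtain ⟨n', hι, hφ⟩ := hequiv x.right n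
  refine ⟨n', Eq.symm ?_⟩
  calc x * inverseGraphHom hconj n * x⁻¹
      = inl x.left * (inr x.right * inverseGraphHom hconj n * (inr x.right)⁻¹)
          * (inl x.left)⁻¹ := by
        conv_lhs => rw [← inl_left_mul_inr_right x]
        group
    _ = inl x.left * inverseGraphHom hconj n' * (inl x.left)⁻¹ := by
        rw [inr_mul_inverseGraphHom_mul_inv hconj hι hφ]
    _ = inverseGraphHom hconj n' :=
        (commute_inl_inverseGraphHom hconj x.left n').mul_inv_cancel

theorem graph_of_phi_is_normal_in_semidirect_product_general
    (hequiv : ∀ g n, ∃ n', ι n' = g * ι n * g⁻¹ ∧ φ n' = α g (φ n))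
    (hconj : ∀ n m, α (ι n) m = φ n * m * (φ n)⁻¹) :
    ∃ K : Subgroup (M ⋊[α] G),
      (K : Set (M ⋊[α] G)) = {p | ∃ n, p = ⟨(φ n)⁻¹, ι n⟩} ∧ K.Normal := by
  have hconj' (n : N) : α (ι n) = MulAut.conj (φ n) := MulEquiv.ext (hconj n)
  refine ⟨(inverseGraphHom hconj').range, ?_, normal_range_inverseGraphHom hconj' hequiv⟩
  exact Set.ext fun _ => exists_congr fun _ => eq_comm

end InverseGraph

/-- Given a normal subgroup `N ⊴ G`, an action of `G` on a group `M` by automorphisms, and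
a `G`-equivariant homomorphism `φ : N → M` through which `N` acts on `M` by conjugation,
the subset `{(φ(n)⁻¹, n) : n ∈ N}` is a normal subgroup of the semidirect product
`M ⋊ G`. -/
theorem graph_of_phi_is_normal_in_semidirect_product
    {G : Type*} [Group G] (N : Subgroup G) [hN : N.Normal]
    {M : Type*} [Group M] [MulDistribMulAction G M] (φ : N →* M)
    (hequiv : ∀ (g : G) (nn : N),
      φ ⟨g * (nn : G) * g⁻¹, hN.conj_mem (nn : G) nn.2 g⟩ = g • φ nn)
    (hconj : ∀ (nn : N) (m : M), (nn : G) • m = φ nn * m * (φ nn)⁻¹) :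
    ∃ K : Subgroup (M ⋊[MulDistribMulAction.toMulAut G M] G),
      (K : Set (M ⋊[MulDistribMulAction.toMulAut G M] G)) =
        {p | ∃ nn : N, p = ⟨(φ nn)⁻¹, (nn : G)⟩} ∧
      K.Normal := by
  exact graph_of_phi_is_normal_in_semidirect_product_general (ι := N.subtype)
    (fun g n => ⟨_, rfl, hequiv g n⟩) hconj
end
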